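/- Let U¹, …, Uⁿ, Φ be smooth extensions on ℝ^{n+1}_+ of u¹,…,uⁿ,φ ∈ C_c^∞(ℝⁿ) with appropriate decay, and let p₁,…,p_{n+1} ∈ (1,∞) with ∑ 1/p_i = 1. Then |∫_{ℝⁿ} det(∇_x u¹,…,∇_x uⁿ) φ dx| ≤ ∏_{i=1}^n ‖∇_{x,t} U^i‖_{L^{p_i}(ℝ^{n+1}_+)} · ‖∇_{x,t} Φ‖_{L^{p_{n+1}}(ℝ^{n+1}_+)}. -/

import Mathlib

open MeasureTheory
open scoped ENNReal BigOperators

/-- The `j`-th coordinate direction in the upper half space model `ℝⁿ × ℝ`: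
for `j < n` it is the `j`-th horizontal direction, for `j = n` the vertical (`t`) direction. -/
noncomputable def dir {n : ℕ} (j : Fin (n + 1)) : EuclideanSpace ℝ (Fin n) × ℝ :=
  if h : (j : ℕ) < n then (EuclideanSpace.single ⟨j, h⟩ 1, 0) else (0, 1)

/-- The `(n+1)×(n+1)` matrix whose `i`-th row is the full gradient `∇_{x,t} V^i`. -/
noncomputable def bulkMatrix {n : ℕ}
    (V : Fin (n + 1) → (EuclideanSpace ℝ (Fin n) × ℝ → ℝ))
    (p : EuclideanSpace ℝ (Fin n) × ℝ) : Matrix (Fin (n + 1)) (Fin (n + 1)) ℝ :=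
  Matrix.of fun i j => fderiv ℝ (V i) p (dir j)

/-- The `n×n` matrix whose `i`-th row is the gradient `∇_x u^i`. -/
noncomputable def bdryMatrix {n : ℕ} (u : Fin n → (EuclideanSpace ℝ (Fin n) → ℝ))
    (x : EuclideanSpace ℝ (Fin n)) : Matrix (Fin n) (Fin n) ℝ :=
  Matrix.of fun i j => fderiv ℝ (u i) x (EuclideanSpace.single j 1)

/-- The open upper half space `ℝ^{n+1}_+ = ℝⁿ × (0,∞)`. -/
def upperHalf (n : ℕ) : Set (EuclideanSpace ℝ (Fin n) × ℝ) := {p | 0 < p.2}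


/-- determinant as a continuous multilinear map of the rows -/
noncomputable def detCMM (m : ℕ) :
    ContinuousMultilinearMap ℝ (fun _ : Fin m => (Fin m → ℝ)) ℝ :=
  { (Matrix.detRowAlternating (n := Fin m) (R := ℝ)).toMultilinearMap with
    cont := Continuous.matrix_det continuous_id }

theorem detCMM_apply (m : ℕ) (v : Fin m → Fin m → ℝ) :
    detCMM m v = Matrix.det (Matrix.of v) := rfl

theorem detCMM_swap {m : ℕ} (v : Fin m → Fin m → ℝ) (i l : Fin m) (hil : i ≠ l)
    (a b : Fin m → ℝ) :
    detCMM m (Function.update (Function.update v l a) i b) =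
      - detCMM m (Function.update (Function.update v l b) i a) := by
  have h := (Matrix.detRowAlternating (n := Fin m) (R := ℝ)).map_swap
    (Function.update (Function.update v l b) i a) hil
  change detCMM m _ = - detCMM m _ at h
  rw [← h]
  congr 1
  funext k
  by_cases hk : k = i
  · subst hk; simp [Function.update_of_ne hil, Function.update_of_ne hil.symm]
  by_cases hk2 : k = l
  · subst hk2; simp [hil.symm]
  simp [hk, hk2, Equiv.swap_apply_of_ne_of_ne]

theorem hadamard {m : ℕ} (A : Matrix (Fin m) (Fin m) ℝ) :
    |A.det| ≤ ∏ i, ‖WithLp.toLp 2 (A i)‖ := by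
  haveI : Fact (Module.finrank ℝ (EuclideanSpace ℝ (Fin m)) = m) := ⟨by simp⟩
  let b := EuclideanSpace.basisFun (Fin m) ℝ
  have h := (b.toBasis.orientation).abs_volumeForm_apply_le (fun i => WithLp.toLp 2 (A i))
  rw [(b.toBasis.orientation).volumeForm_robust' b] at h
  convert h using 2
  rw [Module.Basis.det_apply, ← Matrix.det_transpose]
  congr 1

theorem dir_castSucc {n : ℕ} (j : Fin n) :
    dir (Fin.castSucc j) = (EuclideanSpace.single j 1, 0) := by
  simp [dir]

theorem dir_last {n : ℕ} : dir (Fin.last n) = (0, 1) := by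
  simp [dir]

theorem row_norm_le {n : ℕ} (T : EuclideanSpace ℝ (Fin n) × ℝ →L[ℝ] ℝ) :
    ‖(WithLp.toLp 2 (fun j : Fin (n+1) => T (dir j)) : EuclideanSpace ℝ (Fin (n+1)))‖ ≤ ‖T‖ := by
  set g : EuclideanSpace ℝ (Fin (n+1)) := WithLp.toLp 2 (fun j : Fin (n+1) => T (dir j)) with hg
  let v : EuclideanSpace ℝ (Fin n) × ℝ :=
    (WithLp.toLp 2 (fun j : Fin n => T (dir (Fin.castSucc j))), T (dir (Fin.last n)))
  have hsq : ‖g‖ ^ 2 = ‖v.1‖ ^ 2 + v.2 ^ 2 := by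
    rw [EuclideanSpace.norm_sq_eq, EuclideanSpace.norm_sq_eq, Fin.sum_univ_castSucc]
    simp [hg, v]
  have hv : v = ∑ j : Fin (n+1), T (dir j) • dir j := by
    rw [Fin.sum_univ_castSucc]
    simp only [dir_castSucc, dir_last]
    ext1
    · ext k
      simp [v, Prod.fst_sum, dir_castSucc, Pi.single_apply]
    · simp [v, Prod.snd_sum, dir_last]
  have hTv : T v = ‖g‖ ^ 2 := by
    rw [hv, map_sum, EuclideanSpace.norm_sq_eq]
    simp [hg, pow_two]
  have hvn : ‖v‖ ≤ ‖g‖ := by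
    rw [Prod.norm_def]
    apply max_le
    · apply le_of_sq_le_sq _ (norm_nonneg _)
      nlinarith [sq_nonneg v.2]
    · apply le_of_sq_le_sq _ (norm_nonneg _)
      rw [Real.norm_eq_abs, sq_abs]
      nlinarith [sq_nonneg ‖v.1‖]
  have h1 : ‖g‖ ^ 2 ≤ ‖T‖ * ‖g‖ := by
    rw [← hTv]
    calc T v ≤ ‖T v‖ := le_abs_self _
      _ ≤ ‖T‖ * ‖v‖ := T.le_opNorm v
      _ ≤ _ := by gcongr
  by_contra hc
  push Not at hc
  have : 0 < ‖g‖ := lt_of_le_of_lt (norm_nonneg T) hc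
  nlinarith

/-- rows of the bulk matrix -/
noncomputable def rows {n : ℕ}
    (V : Fin (n + 1) → (EuclideanSpace ℝ (Fin n) × ℝ → ℝ)) (i : Fin (n + 1))
    (q : EuclideanSpace ℝ (Fin n) × ℝ) : Fin (n + 1) → ℝ := fun k => fderiv ℝ (V i) q (dir k)

/-- rows with the last one replaced by a basis vector -/
noncomputable def crows {n : ℕ}
    (V : Fin (n + 1) → (EuclideanSpace ℝ (Fin n) × ℝ → ℝ)) (j i : Fin (n + 1))
    (q : EuclideanSpace ℝ (Fin n) × ℝ) : Fin (n + 1) → ℝ :=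
  Function.update (fun i => rows V i q) (Fin.last n) (Pi.single j 1) i

/-- flux -/
noncomputable def flux {n : ℕ}
    (V : Fin (n + 1) → (EuclideanSpace ℝ (Fin n) × ℝ → ℝ)) (j : Fin (n + 1))
    (q : EuclideanSpace ℝ (Fin n) × ℝ) : ℝ :=
  V (Fin.last n) q * detCMM (n + 1) (fun i => crows V j i q)

theorem rows_contDiff {n : ℕ}
    (V : Fin (n + 1) → (EuclideanSpace ℝ (Fin n) × ℝ → ℝ))
    (hV : ∀ i, ContDiff ℝ (⊤ : ℕ∞) (V i)) (i : Fin (n + 1)) : ContDiff ℝ 1 (rows V i) := by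
  unfold rows
  refine contDiff_pi' fun k => ?_
  exact ((hV i).fderiv_right (m := 1) (by norm_cast)).clm_apply contDiff_const

theorem crows_contDiff {n : ℕ}
    (V : Fin (n + 1) → (EuclideanSpace ℝ (Fin n) × ℝ → ℝ))
    (hV : ∀ i, ContDiff ℝ (⊤ : ℕ∞) (V i)) (j i : Fin (n + 1)) : ContDiff ℝ 1 (crows V j i) := by
  by_cases hi : i = Fin.last n
  · subst hi
    have : crows V j (Fin.last n) = fun _ => Pi.single j 1 := by
      funext q; simp [crows]
    rw [this]; exact contDiff_const
  · have : crows V j i = rows V i := by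
      funext q; simp [crows, hi]
    rw [this]; exact rows_contDiff V hV i

theorem flux_contDiff {n : ℕ}
    (V : Fin (n + 1) → (EuclideanSpace ℝ (Fin n) × ℝ → ℝ))
    (hV : ∀ i, ContDiff ℝ (⊤ : ℕ∞) (V i)) (j : Fin (n + 1)) : ContDiff ℝ 1 (flux V j) := by
  unfold flux
  refine ((hV _).of_le (by norm_cast)).mul ?_
  exact (detCMM (n+1)).contDiff.comp (contDiff_pi' fun i => crows_contDiff V hV j i)

theorem rows_fderiv {n : ℕ}
    (V : Fin (n + 1) → (EuclideanSpace ℝ (Fin n) × ℝ → ℝ))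
    (hV : ∀ i, ContDiff ℝ (⊤ : ℕ∞) (V i)) (i : Fin (n + 1))
    (q w : EuclideanSpace ℝ (Fin n) × ℝ) :
    fderiv ℝ (rows V i) q w = fun k => fderiv ℝ (fderiv ℝ (V i)) q w (dir k) := by
  have hd : DifferentiableAt ℝ (fderiv ℝ (V i)) q :=
    ((hV i).fderiv_right (m := 1) (by norm_cast)).differentiable one_ne_zero q
  have : HasFDerivAt (rows V i)
      (ContinuousLinearMap.pi fun k =>
        (ContinuousLinearMap.apply ℝ ℝ (dir k)).comp (fderiv ℝ (fderiv ℝ (V i)) q)) q := by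
    rw [hasFDerivAt_pi]
    intro k
    exact (ContinuousLinearMap.apply ℝ ℝ (dir k)).hasFDerivAt.comp q hd.hasFDerivAt
  rw [this.fderiv]
  rfl

theorem pi_eq_sum_single {m : ℕ} (a : Fin m → ℝ) :
    a = ∑ j, a j • (Pi.single j (1 : ℝ) : Fin m → ℝ) := by
  funext k
  simp [Finset.sum_apply, Pi.single_apply]

theorem detCMM_update_sum {m : ℕ} (v : Fin m → Fin m → ℝ) (l : Fin m) (a : Fin m → ℝ) :
    detCMM m (Function.update v l a) =
      ∑ j, a j * detCMM m (Function.update v l (Pi.single j 1)) := by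
  conv_lhs => rw [pi_eq_sum_single a]
  have h := map_sum ((detCMM m).toMultilinearMap.toLinearMap v l)
    (fun j => a j • (Pi.single j (1 : ℝ) : Fin m → ℝ)) Finset.univ
  simp only [map_smul, smul_eq_mul] at h
  exact h

theorem piola {n : ℕ}
    (V : Fin (n + 1) → (EuclideanSpace ℝ (Fin n) × ℝ → ℝ))
    (hV : ∀ i, ContDiff ℝ (⊤ : ℕ∞) (V i)) (q : EuclideanSpace ℝ (Fin n) × ℝ) :
    ∑ j, fderiv ℝ (fun q => detCMM (n + 1) (fun i => crows V j i q)) q (dir j) = 0 := by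
  have h1 : ∀ j, fderiv ℝ (fun q => detCMM (n + 1) (fun i => crows V j i q)) q (dir j) =
      ∑ i, detCMM (n+1) (Function.update (fun i => crows V j i q) i
        (fderiv ℝ (crows V j i) q (dir j))) := by
    intro j
    have := HasFDerivAt.multilinear_comp (detCMM (n+1)) (g := fun i => crows V j i)
      (g' := fun i => fderiv ℝ (crows V j i) q) (x := q)
      (fun i => ((crows_contDiff V hV j i).differentiable one_ne_zero q).hasFDerivAt)
    rw [this.fderiv]
    simp [ContinuousLinearMap.sum_apply, ContinuousMultilinearMap.toContinuousLinearMap]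
  simp_rw [h1]
  rw [Finset.sum_comm]
  refine Finset.sum_eq_zero fun i _ => ?_
  by_cases hi : i = Fin.last n
  · subst hi
    refine Finset.sum_eq_zero fun j _ => ?_
    have : crows V j (Fin.last n) = fun _ => Pi.single j 1 := by
      funext q; simp [crows]
    rw [this]
    simp only [fderiv_fun_const, Pi.zero_apply, ContinuousLinearMap.zero_apply]
    exact ContinuousMultilinearMap.map_coord_zero _ (Fin.last n) (by simp)
  · have hc : ∀ j, crows V j i = rows V i := by
      intro j; funext q; simp [crows, hi]
    have hsym : IsSymmSndFDerivAt ℝ (V i) q :=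
      (hV i).contDiffAt.isSymmSndFDerivAt (by simp; norm_cast)
    set v : Fin (n+1) → Fin (n+1) → ℝ := fun i => rows V i q with hv
    set e : Fin (n+1) → Fin (n+1) → ℝ := fun j => Pi.single j 1 with he
    set S := ∑ j, ∑ k, fderiv ℝ (fderiv ℝ (V i)) q (dir j) (dir k) *
      detCMM (n+1) (Function.update (Function.update v (Fin.last n) (e j)) i (e k)) with hS
    have hS1 : ∑ j, detCMM (n+1) (Function.update (fun i => crows V j i q) i
        (fderiv ℝ (crows V j i) q (dir j))) = S := by
      refine Finset.sum_congr rfl fun j _ => ?_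
      rw [hc, rows_fderiv V hV, detCMM_update_sum]
      rfl
    have hS2 : S = -S := by
      conv_lhs => rw [hS, Finset.sum_comm]
      rw [hS, ← Finset.sum_neg_distrib]
      refine Finset.sum_congr rfl fun j _ => ?_
      rw [← Finset.sum_neg_distrib]
      refine Finset.sum_congr rfl fun k _ => ?_
      rw [detCMM_swap v i _ hi, hsym.eq]
      ring
    rw [hS1]
    linarith

theorem div_flux {n : ℕ}
    (V : Fin (n + 1) → (EuclideanSpace ℝ (Fin n) × ℝ → ℝ))
    (hV : ∀ i, ContDiff ℝ (⊤ : ℕ∞) (V i)) (q : EuclideanSpace ℝ (Fin n) × ℝ) :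
    ∑ j, fderiv ℝ (flux V j) q (dir j) = (bulkMatrix V q).det := by
  have h1 : ∀ j, fderiv ℝ (flux V j) q (dir j) =
      V (Fin.last n) q * fderiv ℝ (fun q => detCMM (n + 1) (fun i => crows V j i q)) q (dir j)
      + rows V (Fin.last n) q j * detCMM (n + 1) (Function.update (fun i => rows V i q)
        (Fin.last n) (Pi.single j 1)) := by
    intro j
    have hd : DifferentiableAt ℝ (fun q => detCMM (n + 1) (fun i => crows V j i q)) q :=
      ((detCMM (n+1)).contDiff.comp
        (contDiff_pi' fun i => crows_contDiff V hV j i)).differentiable one_ne_zero q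
    have hd2 : DifferentiableAt ℝ (V (Fin.last n)) q :=
      (hV _).differentiable (by simp) q
    have := (hd2.hasFDerivAt.mul hd.hasFDerivAt).fderiv
    unfold flux
    erw [this]
    simp only [ContinuousLinearMap.add_apply, ContinuousLinearMap.smul_apply, smul_eq_mul]
    rw [mul_comm (detCMM _ _)]
    rfl
  simp_rw [h1]
  rw [Finset.sum_add_distrib, ← Finset.mul_sum, piola V hV, mul_zero, zero_add,
    ← detCMM_update_sum, Function.update_eq_self]
  rfl

theorem flux_last {n : ℕ}
    (V : Fin (n + 1) → (EuclideanSpace ℝ (Fin n) × ℝ → ℝ))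
    (hV : ∀ i, ContDiff ℝ (⊤ : ℕ∞) (V i)) (x : EuclideanSpace ℝ (Fin n)) :
    flux V (Fin.last n) (x, 0) =
      (bdryMatrix (fun (i : Fin n) x => V i.castSucc (x, 0)) x).det * V (Fin.last n) (x, 0) := by
  unfold flux
  rw [mul_comm]
  congr 1
  rw [detCMM_apply, Matrix.det_succ_row _ (Fin.last n), Finset.sum_eq_single (Fin.last n)]
  · have hl : crows V (Fin.last n) (Fin.last n) (x, 0) = Pi.single (Fin.last n) 1 := by
      simp [crows]
    simp only [Matrix.of_apply, hl, Pi.single_eq_same, Fin.val_last, mul_one]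
    rw [← two_mul, pow_mul]
    simp only [even_two, Even.neg_pow, one_pow, one_mul]
    congr 1
    ext i j
    simp only [Matrix.submatrix_apply, Matrix.of_apply, bdryMatrix, Fin.succAbove_last, crows, rows]
    rw [Function.update_of_ne (Fin.castSucc_lt_last i).ne]
    unfold rows
    rw [dir_castSucc]
    have hd2 : DifferentiableAt ℝ (V i.castSucc) (x, 0) :=
      (hV _).differentiable (by simp) _
    have := hd2.hasFDerivAt.comp x
      ((hasFDerivAt_id (𝕜 := ℝ) x).prodMk (hasFDerivAt_const (0:ℝ) x))
    have h2 := this.fderiv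
    simp only [Function.comp_def, id] at h2
    rw [h2]
    simp
  · intro j _ hj
    simp [crows, hj]
  · simp

theorem integral_Ioi_flux {n : ℕ} (F : EuclideanSpace ℝ (Fin n) × ℝ → ℝ)
    (hF : ContDiff ℝ 1 F) (hc : HasCompactSupport F) :
    ∫ q in upperHalf n, fderiv ℝ F q (dir (Fin.last n)) = - ∫ x, F (x, 0) := by
  have hint : Integrable (fun q => fderiv ℝ F q (dir (Fin.last n))) :=
    ((hF.continuous_fderiv one_ne_zero).clm_apply continuous_const).integrable_of_hasCompactSupport
      (hc.fderiv_apply (𝕜 := ℝ) _)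
  have hset : (volume : Measure (EuclideanSpace ℝ (Fin n) × ℝ)).restrict (upperHalf n) =
      volume.prod (volume.restrict (Set.Ioi 0)) := by
    have : upperHalf n = Set.univ ×ˢ Set.Ioi (0:ℝ) := by ext; simp [upperHalf]
    rw [this, Measure.volume_eq_prod, ← Measure.prod_restrict, Measure.restrict_univ]
  have hi2 := hint.restrict (s := upperHalf n)
  rw [hset] at hi2 ⊢
  rw [integral_prod _ hi2, ← integral_neg]
  congr 1
  funext x
  have hcd : ContDiff ℝ 1 (fun t : ℝ => F (x, t)) := hF.comp (contDiff_const.prodMk contDiff_id)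
  have hcs : HasCompactSupport (fun t : ℝ => F (x, t)) :=
    hc.comp_isClosedEmbedding (Topology.IsClosedEmbedding.of_continuous_injective_isClosedMap
      (by fun_prop) (Prod.mk_right_injective x) (isClosedMap_prodMk_left x))
  rw [← hcs.integral_Ioi_deriv_eq hcd 0]
  congr 1
  funext t
  have h1 := (hF.differentiable one_ne_zero (x, t)).hasFDerivAt.comp_hasDerivAt t
    ((hasDerivAt_const t x).prodMk (hasDerivAt_id t))
  rw [dir_last]
  exact h1.deriv.symm

theorem integral_horiz_flux {n : ℕ} (F : EuclideanSpace ℝ (Fin n) × ℝ → ℝ)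
    (hF : ContDiff ℝ 1 F) (hc : HasCompactSupport F) (j : Fin n) :
    ∫ q in upperHalf n, fderiv ℝ F q (dir j.castSucc) = 0 := by
  have hint : Integrable (fun q => fderiv ℝ F q (dir j.castSucc)) :=
    ((hF.continuous_fderiv one_ne_zero).clm_apply continuous_const).integrable_of_hasCompactSupport
      (hc.fderiv_apply (𝕜 := ℝ) _)
  have hset : (volume : Measure (EuclideanSpace ℝ (Fin n) × ℝ)).restrict (upperHalf n) =
      volume.prod (volume.restrict (Set.Ioi 0)) := by
    have : upperHalf n = Set.univ ×ˢ Set.Ioi (0:ℝ) := by ext; simp [upperHalf]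
    rw [this, Measure.volume_eq_prod, ← Measure.prod_restrict, Measure.restrict_univ]
  have hi2 := hint.restrict (s := upperHalf n)
  rw [hset] at hi2 ⊢
  rw [integral_prod_symm _ hi2]
  refine integral_eq_zero_of_ae (Filter.Eventually.of_forall fun t => ?_)
  simp only [Pi.zero_apply]
  have hcd : ContDiff ℝ 1 (fun x => F (x, t)) := hF.comp (contDiff_id.prodMk contDiff_const)
  have hcs : HasCompactSupport (fun x => F (x, t)) :=
    hc.comp_isClosedEmbedding (Topology.IsClosedEmbedding.of_continuous_injective_isClosedMap
      (by fun_prop) (Prod.mk_left_injective t) (isClosedMap_prodMk_right t))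
  have key : ∀ x, fderiv ℝ F (x, t) (dir j.castSucc) =
      fderiv ℝ (fun x => F (x, t)) x (EuclideanSpace.single j 1) := by
    intro x
    have h1 := (hF.differentiable one_ne_zero (x, t)).hasFDerivAt.comp x
      ((hasFDerivAt_id (𝕜 := ℝ) x).prodMk (hasFDerivAt_const t x))
    have h2 := h1.fderiv
    simp only [Function.comp_def, id] at h2
    rw [h2, dir_castSucc]
    simp
  simp_rw [key]
  have := integral_mul_fderiv_eq_neg_fderiv_mul_of_integrable (μ := volume)
    (𝕜 := ℝ) (f := fun _ : EuclideanSpace ℝ (Fin n) => (1:ℝ)) (g := fun x => F (x, t))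
    (v := EuclideanSpace.single j 1) (by simp)
    (by
      simp only [one_mul]
      exact ((hcd.continuous_fderiv one_ne_zero).clm_apply
        continuous_const).integrable_of_hasCompactSupport (hcs.fderiv_apply (𝕜 := ℝ) _))
    (by simpa using hcd.continuous.integrable_of_hasCompactSupport hcs)
    (by fun_prop) (by intro x _; exact hcd.differentiable one_ne_zero x)
  simpa using this

theorem stokes {n : ℕ}
    (V : Fin (n + 1) → (EuclideanSpace ℝ (Fin n) × ℝ → ℝ))
    (hV : ∀ i, ContDiff ℝ (⊤ : ℕ∞) (V i)) (hc : HasCompactSupport (V (Fin.last n))) :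
    ∫ q in upperHalf n, (bulkMatrix V q).det =
    - ∫ x, (bdryMatrix (fun (i : Fin n) x => V i.castSucc (x, 0)) x).det *
      V (Fin.last n) (x, 0) := by
  have hF := flux_contDiff V hV
  have hFc : ∀ j, HasCompactSupport (flux V j) := fun j => hc.mul_right
  simp_rw [← div_flux V hV]
  rw [integral_finsetSum, Fin.sum_univ_castSucc, Finset.sum_eq_zero, zero_add,
    integral_Ioi_flux _ (hF _) (hFc _)]
  · simp_rw [flux_last V hV]
  · intro j _
    exact integral_horiz_flux _ (hF _) (hFc _) j
  · intro j _
    exact ((((hF j).continuous_fderiv one_ne_zero).clm_apply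
      continuous_const).integrable_of_hasCompactSupport
        ((hFc j).fderiv_apply (𝕜 := ℝ) _)).restrict

theorem main_bound {n : ℕ}
    (V : Fin (n + 1) → (EuclideanSpace ℝ (Fin n) × ℝ → ℝ))
    (hV : ∀ i, ContDiff ℝ (⊤ : ℕ∞) (V i))
    (p : Fin (n + 1) → ℝ) (hp : ∀ i, 1 < p i) (hp1 : ∑ i, 1 / p i = 1) :
    ENNReal.ofReal |∫ q in upperHalf n, (bulkMatrix V q).det| ≤
      ∏ i, eLpNorm (fun q => ‖fderiv ℝ (V i) q‖) (ENNReal.ofReal (p i))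
          (volume.restrict (upperHalf n)) := by
  have hp0 : ∀ i, 0 < p i := fun i => one_pos.trans (hp i)
  have hL : ∀ i, eLpNorm (fun q => ‖fderiv ℝ (V i) q‖) (ENNReal.ofReal (p i))
      (volume.restrict (upperHalf n)) =
      (∫⁻ q in upperHalf n, ‖fderiv ℝ (V i) q‖ₑ ^ p i) ^ (1 / p i) := by
    intro i
    rw [eLpNorm_norm, eLpNorm_eq_lintegral_rpow_enorm_toReal (by simpa using hp0 i) (by simp),
      ENNReal.toReal_ofReal (hp0 i).le]
  simp_rw [hL]
  refine le_trans ?_ (ENNReal.lintegral_prod_norm_pow_le Finset.univ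
    (f := fun i q => ‖fderiv ℝ (V i) q‖ₑ ^ p i) (fun i _ => ?_) hp1
    (fun i _ => (one_div_pos.2 (hp0 i)).le))
  · rw [← Real.enorm_eq_ofReal_abs]
    refine (enorm_integral_le_lintegral_enorm _).trans (lintegral_mono fun q => ?_)
    have h : ∀ i, (‖fderiv ℝ (V i) q‖ₑ ^ p i) ^ (1 / p i) = ENNReal.ofReal ‖fderiv ℝ (V i) q‖ := by
      intro i
      rw [← ENNReal.rpow_mul, mul_one_div_cancel (hp0 i).ne', ENNReal.rpow_one, ofReal_norm]
    simp_rw [h]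
    rw [← ENNReal.ofReal_prod_of_nonneg (fun i _ => norm_nonneg _), Real.enorm_eq_ofReal_abs]
    apply ENNReal.ofReal_le_ofReal
    refine (hadamard _).trans (Finset.prod_le_prod (fun i _ => norm_nonneg _) fun i _ => ?_)
    exact row_norm_le (fderiv ℝ (V i) q)
  · have : Continuous (fderiv ℝ (V i)) := (hV i).continuous_fderiv (by simp)
    exact (this.enorm.measurable.pow_const _).aemeasurable

/-- The Stokes–Hadamard–Hölder estimate: for smooth compactly supported extensions
`U¹,…,Uⁿ,Φ` of `u¹,…,uⁿ,φ` and exponents `p₁,…,p_{n+1} ∈ (1,∞)` with `∑ 1/pᵢ = 1`,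
`|∫_{ℝⁿ} det(∇_x u¹,…,∇_x uⁿ) φ| ≤ ∏ᵢ ‖∇_{x,t}Uⁱ‖_{L^{pᵢ}(ℝ^{n+1}_+)} ·
‖∇_{x,t}Φ‖_{L^{p_{n+1}}(ℝ^{n+1}_+)}`. -/
theorem stmt10 {n : ℕ} (u : Fin n → EuclideanSpace ℝ (Fin n) → ℝ)
    (φ : EuclideanSpace ℝ (Fin n) → ℝ)
    (U : Fin n → EuclideanSpace ℝ (Fin n) × ℝ → ℝ)
    (Φ : EuclideanSpace ℝ (Fin n) × ℝ → ℝ)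
    (p : Fin (n + 1) → ℝ) (hp : ∀ i, 1 < p i)
    (hp1 : ∑ i, 1 / p i = 1)
    (hu : ∀ i, ContDiff ℝ (⊤ : ℕ∞) (u i)) (hu' : ∀ i, HasCompactSupport (u i))
    (hφ : ContDiff ℝ (⊤ : ℕ∞) φ) (hφ' : HasCompactSupport φ)
    (hU : ∀ i, ContDiff ℝ (⊤ : ℕ∞) (U i)) (hU' : ∀ i, HasCompactSupport (U i))
    (hΦ : ContDiff ℝ (⊤ : ℕ∞) Φ) (hΦ' : HasCompactSupport Φ)
    (hext : ∀ i x, U i (x, 0) = u i x) (hextφ : ∀ x, Φ (x, 0) = φ x) :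
    ENNReal.ofReal |∫ x, (bdryMatrix u x).det * φ x| ≤
      (∏ i : Fin n,
        eLpNorm (fun q => ‖fderiv ℝ (U i) q‖) (ENNReal.ofReal (p (Fin.castSucc i)))
          (volume.restrict (upperHalf n))) *
      eLpNorm (fun q => ‖fderiv ℝ Φ q‖) (ENNReal.ofReal (p (Fin.last n)))
        (volume.restrict (upperHalf n)) := by
  let V : Fin (n + 1) → (EuclideanSpace ℝ (Fin n) × ℝ → ℝ) := Fin.snoc (α := fun _ => EuclideanSpace ℝ (Fin n) × ℝ → ℝ) U Φ
  have hV1 : ∀ i : Fin n, V i.castSucc = U i := fun i => by simp [V]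
  have hV2 : V (Fin.last n) = Φ := by simp [V]
  have hV : ∀ i, ContDiff ℝ (⊤ : ℕ∞) (V i) := by
    intro i
    refine Fin.lastCases ?_ (fun i => ?_) i
    · rw [hV2]; exact hΦ
    · rw [hV1]; exact hU i
  have h := main_bound V hV p hp hp1
  rw [stokes V hV (by rw [hV2]; exact hΦ'), abs_neg, Fin.prod_univ_castSucc] at h
  simp only [hV1, hV2, hext, hextφ] at h
  exact h
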